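/- Let X = (X_1,…,X_n) be a random vector such that X_1 + ⋯ + X_n is almost surely equal to a constant. Then DQ^VaR_α(X) = 0 for every α ∈ (0, 1/n), and, if the X_i are integrable, DQ^ES_α(X) = 0 for every α ∈ (0,1). -/

import Mathlib

open MeasureTheory ProbabilityTheory Filter Set

namespace DQ

variable {Ω : Type*} [MeasurableSpace Ω]

/-- An atomless probability measure: every non-null measurable set has a measurable
subset of strictly smaller positive measure. -/
def Atomless (P : Measure Ω) : Prop :=
  ∀ A : Set Ω, MeasurableSet A → 0 < P A →
    ∃ B, MeasurableSet B ∧ B ⊆ A ∧ 0 < P B ∧ P B < P A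

/-- Value-at-Risk at level `α` (small-`α` convention):
`VaR_α(X) = inf {x | P(X ≤ x) ≥ 1 - α}`. -/
noncomputable def VaR (P : Measure Ω) (α : ℝ) (X : Ω → ℝ) : ℝ :=
  sInf {x : ℝ | 1 - α ≤ (P {ω | X ω ≤ x}).toReal}

/-- Expected Shortfall at level `α`: `ES_α(X) = (1/α) ∫_0^α VaR_β(X) dβ`. -/
noncomputable def ES (P : Measure Ω) (α : ℝ) (X : Ω → ℝ) : ℝ :=
  (1 / α) * ∫ β in Set.Ioo (0 : ℝ) α, VaR P β X

/-- `α* = inf {β ∈ (0,1) | VaR_β(∑ Xᵢ) ≤ ∑ VaR_α(Xᵢ)}`, with `inf ∅ = 1`. -/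
noncomputable def alphaStarVaR (P : Measure Ω) (α : ℝ) {n : ℕ} (X : Fin n → Ω → ℝ) : ℝ :=
  sInf ({β ∈ Set.Ioo (0 : ℝ) 1 |
    VaR P β (fun ω => ∑ i, X i ω) ≤ ∑ i, VaR P α (X i)} ∪ {1})

/-- Diversification quotient based on VaR: `DQ^VaR_α(X) = α*/α`. -/
noncomputable def DQVaR (P : Measure Ω) (α : ℝ) {n : ℕ} (X : Fin n → Ω → ℝ) : ℝ :=
  alphaStarVaR P α X / α

/-- `α* = inf {β ∈ (0,1) | ES_β(∑ Xᵢ) ≤ ∑ ES_α(Xᵢ)}`, with `inf ∅ = 1`. -/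
noncomputable def alphaStarES (P : Measure Ω) (α : ℝ) {n : ℕ} (X : Fin n → Ω → ℝ) : ℝ :=
  sInf ({β ∈ Set.Ioo (0 : ℝ) 1 |
    ES P β (fun ω => ∑ i, X i ω) ≤ ∑ i, ES P α (X i)} ∪ {1})

/-- Diversification quotient based on ES: `DQ^ES_α(X) = α*/α`. -/
noncomputable def DQES (P : Measure Ω) (α : ℝ) {n : ℕ} (X : Fin n → Ω → ℝ) : ℝ :=
  alphaStarES P α X / α

end DQ

namespace DQ

theorem VaR_le_iff {Ω : Type*} [MeasurableSpace Ω] (P : Measure Ω) [IsProbabilityMeasure P]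
    (X : Ω → ℝ) (hX : Measurable X) (α : ℝ) (hα : α ∈ Set.Ioo (0 : ℝ) 1) (x : ℝ) :
    VaR P α X ≤ x ↔ 1 - α ≤ (P {ω | X ω ≤ x}).toReal := by
  have hprob : IsProbabilityMeasure (P.map X) := Measure.isProbabilityMeasure_map hX.aemeasurable
  have hF : ∀ y, (P {ω | X ω ≤ y}).toReal = cdf (P.map X) y := by
    intro y
    rw [cdf_eq_real, Measure.real, Measure.map_apply hX measurableSet_Iic]
    rfl
  unfold VaR
  simp only [hF]
  set F := cdf (P.map X) with hFdef
  have hmono : Monotone F := monotone_cdf _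
  have hne : {x : ℝ | 1 - α ≤ F x}.Nonempty := by
    have h := (tendsto_cdf_atTop (P.map X)).eventually (lt_mem_nhds (show 1 - α < 1 by linarith [hα.1]))
    obtain ⟨y, hy⟩ := h.exists
    exact ⟨y, le_of_lt hy⟩
  have hbdd : BddBelow {x : ℝ | 1 - α ≤ F x} := by
    have h := (tendsto_cdf_atBot (P.map X)).eventually (gt_mem_nhds (show 0 < 1 - α by linarith [hα.2]))
    obtain ⟨y, hy⟩ := h.exists
    refine ⟨y, fun z hz => ?_⟩
    by_contra hlt
    have h1 : F z ≤ F y := hmono (le_of_not_ge hlt)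
    have h2 : 1 - α ≤ F z := hz
    have h3 : F y < 1 - α := hy
    linarith
  constructor
  · intro h
    have hc : Tendsto F (nhdsWithin x (Set.Ioi x)) (nhds (F x)) :=
      (F.right_continuous x).mono Set.Ioi_subset_Ici_self
    refine ge_of_tendsto hc ?_
    filter_upwards [self_mem_nhdsWithin] with y hy
    obtain ⟨z, hz, hzy⟩ := exists_lt_of_csInf_lt hne (lt_of_le_of_lt h hy)
    exact le_trans hz (hmono hzy.le)
  · intro h
    exact csInf_le hbdd h

theorem VaR_ae_const {Ω : Type*} [MeasurableSpace Ω] (P : Measure Ω) [IsProbabilityMeasure P]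
    (Y : Ω → ℝ) (hY : Measurable Y) (c : ℝ) (hc : ∀ᵐ ω ∂P, Y ω = c)
    (β : ℝ) (hβ : β ∈ Set.Ioo (0 : ℝ) 1) : VaR P β Y = c := by
  apply le_antisymm
  · rw [VaR_le_iff P Y hY β hβ]
    have : P {ω | Y ω ≤ c} = 1 := by
      rw [← mem_ae_iff_prob_eq_one (measurableSet_le hY measurable_const)]
      filter_upwards [hc] with ω h
      exact h.le
    rw [this]; simp; exact hβ.1.le
  · have h := (VaR_le_iff P Y hY β hβ _).1 le_rfl
    by_contra hlt
    push Not at hlt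
    have : P {ω | Y ω ≤ VaR P β Y} = 0 := by
      rw [measure_eq_zero_iff_ae_notMem]
      filter_upwards [hc] with ω h
      simp only [Set.mem_setOf_eq, not_le, h]; exact hlt
    rw [this] at h
    simp at h
    linarith [hβ.2]

theorem VaR_antitoneOn {Ω : Type*} [MeasurableSpace Ω] (P : Measure Ω) [IsProbabilityMeasure P]
    (X : Ω → ℝ) (hX : Measurable X) : AntitoneOn (fun β => VaR P β X) (Set.Ioo (0 : ℝ) 1) := by
  intro a ha b hb hab
  have h := (VaR_le_iff P X hX a ha _).1 le_rfl
  exact (VaR_le_iff P X hX b hb _).2 (by linarith)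

theorem map_VaR {Ω : Type*} [MeasurableSpace Ω] (P : Measure Ω) [IsProbabilityMeasure P]
    (X : Ω → ℝ) (hX : Measurable X) :
    AEMeasurable (fun β => VaR P β X) (volume.restrict (Set.Ioo (0 : ℝ) 1)) ∧
    (volume.restrict (Set.Ioo (0 : ℝ) 1)).map (fun β => VaR P β X) = P.map X := by
  have hm : AEMeasurable (fun β => VaR P β X) (volume.restrict (Set.Ioo (0 : ℝ) 1)) :=
    aemeasurable_restrict_of_antitoneOn measurableSet_Ioo (VaR_antitoneOn P X hX)
  refine ⟨hm, ?_⟩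
  have hprob : IsProbabilityMeasure (P.map X) := Measure.isProbabilityMeasure_map hX.aemeasurable
  have hfin : IsProbabilityMeasure (volume.restrict (Set.Ioo (0 : ℝ) 1)) := ⟨by simp⟩
  have hfin2 := Measure.isProbabilityMeasure_map hm
  refine Measure.ext_of_Iic _ _ fun x => ?_
  rw [Measure.map_apply_of_aemeasurable hm measurableSet_Iic, Measure.map_apply hX measurableSet_Iic]
  rw [Measure.restrict_apply' measurableSet_Ioo]
  set p := (P {ω | X ω ≤ x}).toReal with hp
  have hp0 : 0 ≤ p := ENNReal.toReal_nonneg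
  have hp1 : p ≤ 1 := ENNReal.toReal_le_of_le_ofReal zero_le_one (by simpa using prob_le_one)
  have hs : P (X ⁻¹' Set.Iic x) = ENNReal.ofReal p := (ENNReal.ofReal_toReal (measure_ne_top _ _)).symm
  rw [hs]
  apply le_antisymm
  · calc _ ≤ volume (Set.Icc (1 - p) 1) := measure_mono (by
          rintro b ⟨h1, h2⟩
          have := (VaR_le_iff P X hX b h2 x).1 h1
          exact ⟨by linarith, h2.2.le⟩)
      _ = _ := by rw [Real.volume_Icc]; congr 1; ring
  · calc ENNReal.ofReal p = volume (Set.Ioo (1 - p) 1) := by rw [Real.volume_Ioo]; congr 1; ring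
      _ ≤ _ := measure_mono (by
          rintro b ⟨h1, h2⟩
          have hb : b ∈ Set.Ioo (0:ℝ) 1 := ⟨by linarith, h2⟩
          exact ⟨(VaR_le_iff P X hX b hb x).2 (by linarith), hb⟩)

theorem mean_le_ES {Ω : Type*} [MeasurableSpace Ω] (P : Measure Ω) [IsProbabilityMeasure P]
    (X : Ω → ℝ) (hX : Measurable X) (hi : Integrable X P) (α : ℝ) (hα : α ∈ Set.Ioo (0 : ℝ) 1) :
    ∫ ω, X ω ∂P ≤ ES P α X := by
  obtain ⟨hm, hmap⟩ := map_VaR P X hX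
  have hint : IntegrableOn (fun β => VaR P β X) (Set.Ioo (0 : ℝ) 1) := by
    have h1 : Integrable id (P.map X) :=
      (integrable_map_measure measurable_id.aestronglyMeasurable hX.aemeasurable).2 hi
    rw [← hmap] at h1
    exact (integrable_map_measure measurable_id.aestronglyMeasurable hm).1 h1
  have heq : ∫ ω, X ω ∂P = ∫ β in Set.Ioo (0 : ℝ) 1, VaR P β X := by
    have h1 := integral_map (μ := P) (f := id) hX.aemeasurable (measurable_id.aestronglyMeasurable)
    have h2 := integral_map (f := id) hm (measurable_id.aestronglyMeasurable)
    rw [hmap, h1] at h2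
    exact h2
  have hu : Set.Ioo (0 : ℝ) 1 = Set.Ioo 0 α ∪ Set.Ico α 1 :=
    (Set.Ioo_union_Ico_eq_Ioo hα.1 hα.2.le).symm
  have hi1 : IntegrableOn (fun β => VaR P β X) (Set.Ioo (0 : ℝ) α) :=
    hint.mono_set (Set.Ioo_subset_Ioo_right hα.2.le)
  have hi2 : IntegrableOn (fun β => VaR P β X) (Set.Ico α 1) :=
    hint.mono_set (by rw [hu]; exact Set.subset_union_right)
  have hsplit : ∫ β in Set.Ioo (0 : ℝ) 1, VaR P β X =
      (∫ β in Set.Ioo (0 : ℝ) α, VaR P β X) + ∫ β in Set.Ico α 1, VaR P β X := by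
    rw [hu]
    refine setIntegral_union ?_ measurableSet_Ico hi1 hi2
    rw [Set.disjoint_left]
    intro x h1 h2
    exact absurd h1.2 (not_lt.2 h2.1)
  have hanti := VaR_antitoneOn P X hX
  have b1 : α * VaR P α X ≤ ∫ β in Set.Ioo (0 : ℝ) α, VaR P β X := by
    have := setIntegral_mono_on (μ := volume) (s := Set.Ioo (0:ℝ) α) (f := fun _ => VaR P α X)
      (g := fun β => VaR P β X) (by simp) hi1 measurableSet_Ioo
      (fun b hb => hanti ⟨hb.1, hb.2.trans hα.2⟩ hα hb.2.le)
    simpa [Measure.real, hα.1.le] using this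
  have b2 : ∫ β in Set.Ico α 1, VaR P β X ≤ (1 - α) * VaR P α X := by
    have := setIntegral_mono_on (μ := volume) (s := Set.Ico α 1) (g := fun _ => VaR P α X)
      (f := fun β => VaR P β X) hi2 (by simp) measurableSet_Ico
      (fun b hb => hanti hα ⟨hα.1.trans_le hb.1, hb.2⟩ hb.1)
    simpa [Measure.real, hα.2.le] using this
  rw [heq, hsplit]
  unfold ES
  set I := ∫ β in Set.Ioo (0 : ℝ) α, VaR P β X
  have h0 := hα.1
  rw [one_div, ← div_eq_inv_mul, le_div_iff₀ h0]
  have h1 := hα.2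
  nlinarith [mul_le_mul_of_nonneg_left b2 h0.le, mul_le_mul_of_nonneg_left b1 (sub_nonneg.2 h1.le)]

theorem ES_ae_const {Ω : Type*} [MeasurableSpace Ω] (P : Measure Ω) [IsProbabilityMeasure P]
    (Y : Ω → ℝ) (hY : Measurable Y) (c : ℝ) (hc : ∀ᵐ ω ∂P, Y ω = c)
    (β : ℝ) (hβ : β ∈ Set.Ioo (0 : ℝ) 1) : ES P β Y = c := by
  unfold ES
  have h0 := hβ.1
  rw [setIntegral_congr_fun (g := fun _ => c) measurableSet_Ioo
    (fun b hb => VaR_ae_const P Y hY c hc b ⟨hb.1, hb.2.trans hβ.2⟩)]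
  simp [Measure.real, h0.le]
  field_simp

theorem sInf_zero (S : Set ℝ) (h : ∀ β ∈ Set.Ioo (0 : ℝ) 1, β ∈ S) :
    sInf ({β ∈ Set.Ioo (0 : ℝ) 1 | β ∈ S} ∪ {1}) = 0 := by
  have : ({β ∈ Set.Ioo (0 : ℝ) 1 | β ∈ S} ∪ {1}) = Set.Ioc 0 1 := by
    ext x
    simp only [Set.mem_union, Set.mem_setOf_eq, Set.mem_singleton_iff]
    constructor
    · rintro (⟨hx, _⟩ | rfl)
      · exact ⟨hx.1, hx.2.le⟩
      · exact ⟨one_pos, le_rfl⟩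
    · intro hx
      rcases hx.2.lt_or_eq with h1 | h1
      · exact Or.inl ⟨⟨hx.1, h1⟩, h x ⟨hx.1, h1⟩⟩
      · exact Or.inr h1
  rw [this, csInf_Ioc one_pos]

theorem const_le_sum_VaR {Ω : Type*} [MeasurableSpace Ω] (P : Measure Ω) [IsProbabilityMeasure P]
    (n : ℕ) (X : Fin n → Ω → ℝ) (hX : ∀ i, Measurable (X i))
    (c : ℝ) (hc : ∀ᵐ ω ∂P, (∑ i, X i ω) = c) (α : ℝ) (hα : α ∈ Set.Ioo (0 : ℝ) 1)
    (hn : n * α < 1) : c ≤ ∑ i, VaR P α (X i) := by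
  by_contra hlt
  push Not at hlt
  have hcov : ∀ᵐ ω ∂P, ω ∈ ⋃ i, {ω | X i ω ≤ VaR P α (X i)}ᶜ := by
    filter_upwards [hc] with ω hω
    by_contra hno
    simp only [Set.mem_iUnion, Set.mem_compl_iff, Set.mem_setOf_eq, not_exists, not_not] at hno
    have := Finset.sum_le_sum (fun i (_ : i ∈ Finset.univ) => hno i)
    linarith
  have h1 : P.real (⋃ i, {ω | X i ω ≤ VaR P α (X i)}ᶜ) = 1 := by
    rw [Measure.real, (mem_ae_iff_prob_eq_one (MeasurableSet.iUnion fun i => (measurableSet_le (hX i) measurable_const).compl)).1 hcov]; simp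
  have h2 : ∀ i, P.real {ω | X i ω ≤ VaR P α (X i)}ᶜ ≤ α := by
    intro i
    rw [probReal_compl_eq_one_sub (measurableSet_le (hX i) measurable_const)]
    have := (VaR_le_iff P (X i) (hX i) α hα _).1 le_rfl
    change 1 - (P _).toReal ≤ α
    linarith
  have h3 := measureReal_iUnion_fintype_le (μ := P) (fun i => {ω | X i ω ≤ VaR P α (X i)}ᶜ)
  have h4 := Finset.sum_le_sum (fun i (_ : i ∈ Finset.univ) => h2 i)
  simp only [Finset.sum_const, Finset.card_univ, Fintype.card_fin, nsmul_eq_mul] at h4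
  linarith

end DQ

open DQ in
/-- If X₁ + ⋯ + Xₙ is a.s. equal to a constant, then DQ^VaR_α(X) = 0 for every
α ∈ (0, 1/n), and, if the Xᵢ are integrable, DQ^ES_α(X) = 0 for every α ∈ (0,1). -/
theorem stmt5 {Ω : Type*} [MeasurableSpace Ω] (P : Measure Ω) [IsProbabilityMeasure P]
    (hP : Atomless P) (n : ℕ) (X : Fin n → Ω → ℝ) (hX : ∀ i, Measurable (X i))
    (c : ℝ) (hc : ∀ᵐ ω ∂P, (∑ i, X i ω) = c) :
    (∀ α ∈ Set.Ioo (0 : ℝ) (1 / n), DQVaR P α X = 0) ∧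
    ((∀ i, Integrable (X i) P) → ∀ α ∈ Set.Ioo (0 : ℝ) 1, DQES P α X = 0) := by
  have hS : Measurable (fun ω => ∑ i, X i ω) := Finset.measurable_sum _ (fun i _ => hX i)
  constructor
  · intro α hα
    have hn : 0 < n := by
      rcases Nat.eq_zero_or_pos n with h | h
      · subst h
        have h1 := hα.1
        have h2 := hα.2
        simp at h2
        linarith
      · exact h
    have hn' : (1 : ℝ) ≤ n := by exact_mod_cast hn
    have hnα : n * α < 1 := by
      have := (lt_div_iff₀ (by linarith : (0:ℝ) < n)).1 hα.2
      linarith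
    have hα1 : α ∈ Set.Ioo (0 : ℝ) 1 := ⟨hα.1, by nlinarith [hα.1]⟩
    have hle := const_le_sum_VaR P n X hX c hc α hα1 hnα
    have : alphaStarVaR P α X = 0 :=
      sInf_zero {β | VaR P β (fun ω => ∑ i, X i ω) ≤ ∑ i, VaR P α (X i)} (fun β hβ => by
        rw [Set.mem_setOf_eq, VaR_ae_const P _ hS c hc β hβ]; exact hle)
    rw [DQVaR, this, zero_div]
  · intro hi α hα
    have hle : c ≤ ∑ i, ES P α (X i) := by
      have h1 : ∫ ω, (∑ i, X i ω) ∂P = c := by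
        rw [integral_congr_ae hc]; simp
      rw [← h1, integral_finset_sum _ (fun i _ => hi i)]
      exact Finset.sum_le_sum (fun i _ => mean_le_ES P (X i) (hX i) (hi i) α hα)
    have : alphaStarES P α X = 0 :=
      sInf_zero {β | ES P β (fun ω => ∑ i, X i ω) ≤ ∑ i, ES P α (X i)} (fun β hβ => by
        rw [Set.mem_setOf_eq, ES_ae_const P _ hS c hc β hβ]; exact hle)
    rw [DQES, this, zero_div]
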